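/- arXiv:2504.12615 — 2 statements merged into one kernel-verified Lean document; each statement's English description precedes it below -/
import Mathlib

section
/- For R = Q D_λ Q*, the determinant identity det( I_p + R ∘ R^{−1} ) = ∏_{m=1}^p (1 + μ_m) holds, where ∘ denotes the Hadamard (entrywise) product. -/
open Matrix Complex

/-!
Each row of the Fourier matrix `Q` is, up to a scalar, a homomorphism from the additive group of
indices to the multiplicative monoid of `ℂ`, and so is each column of `Qᴴ`. Hence the Hadamard
product of `Q D Qᴴ` and `Q E Qᴴ` is again of the form `Q C Qᴴ`, the diagonal of `C` being a multiple
of the convolution of the diagonals of `D` and `E`. Since `R⁻¹ = Q D⁻¹ Qᴴ`, the matrix `R ∘ R⁻¹` is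
diagonalized by `Q` with eigenvalues `μ m`.
-/

section DiagonalConjugation

variable {l m n A : Type*} [Fintype n] [DecidableEq n]

theorem hadamard_mul_diagonal_mul [CommSemiring A] [Add n]
    {U : Matrix l n A} {V : Matrix n m A} {s t : A}
    (hU : ∀ i a b, U i a * U i b = s * U i (a + b))
    (hV : ∀ a b j, V a j * V b j = t * V (a + b) j) (d e : n → A) :
    (U * diagonal d * V) ⊙ (U * diagonal e * V) =
      U * diagonal (fun c => s * t * ∑ x : n × n with x.1 + x.2 = c, d x.1 * e x.2) * V := by
  ext i j
  have regroup (a b : n) : U i a * d a * V a j * (U i b * e b * V b j) =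
      U i (a + b) * (s * t * (d a * e b)) * V (a + b) j := by
    calc U i a * d a * V a j * (U i b * e b * V b j)
        = U i a * U i b * (d a * e b) * (V a j * V b j) := by ring
      _ = U i (a + b) * (s * t * (d a * e b)) * V (a + b) j := by rw [hU, hV]; ring
  simp only [hadamard_apply, mul_apply (N := V), mul_diagonal]
  calc (∑ a, U i a * d a * V a j) * ∑ b, U i b * e b * V b j
      = ∑ x : n × n, U i (x.1 + x.2) * (s * t * (d x.1 * e x.2)) * V (x.1 + x.2) j := by
        simp only [Finset.sum_mul_sum, ← Fintype.sum_prod_type', regroup]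
    _ = ∑ c, ∑ x : n × n with x.1 + x.2 = c,
          U i (x.1 + x.2) * (s * t * (d x.1 * e x.2)) * V (x.1 + x.2) j :=
        (Finset.sum_fiberwise _ _ _).symm
    _ = ∑ c, U i c * (s * t * ∑ x : n × n with x.1 + x.2 = c, d x.1 * e x.2) * V c j := by
        refine Finset.sum_congr rfl fun c _ => ?_
        simp only [Finset.mul_sum, Finset.sum_mul]
        refine Finset.sum_congr rfl fun x hx => ?_
        rw [(Finset.mem_filter.mp hx).2]

variable [CommRing A] {U V : Matrix n n A}

theorem inv_mul_diagonal_mul (hUV : U * V = 1) {d e : n → A} (hde : ∀ a, d a * e a = 1) :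
    (U * diagonal d * V)⁻¹ = U * diagonal e * V := by
  refine inv_eq_right_inv ?_
  calc U * diagonal d * V * (U * diagonal e * V)
      = U * (diagonal d * (V * U) * diagonal e) * V := by simp only [Matrix.mul_assoc]
    _ = 1 := by
      simp only [mul_eq_one_comm.mp hUV, Matrix.mul_one, diagonal_mul_diagonal, hde, diagonal_one,
        hUV]

theorem det_one_add_mul_diagonal_mul (hUV : U * V = 1) (d : n → A) :
    (1 + U * diagonal d * V).det = ∏ a, (1 + d a) := by
  rw [Matrix.mul_assoc, det_one_add_mul_comm, Matrix.mul_assoc, mul_eq_one_comm.mp hUV,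
    Matrix.mul_one, ← diagonal_one, diagonal_add, det_diagonal]

theorem det_one_add_hadamard_inv [Add n] {s t : A} (hUV : U * V = 1)
    (hU : ∀ i a b, U i a * U i b = s * U i (a + b))
    (hV : ∀ a b j, V a j * V b j = t * V (a + b) j)
    {d e : n → A} (hde : ∀ a, d a * e a = 1) :
    (1 + (U * diagonal d * V) ⊙ (U * diagonal d * V)⁻¹).det =
      ∏ c, (1 + s * t * ∑ x : n × n with x.1 + x.2 = c, d x.1 * e x.2) := by
  rw [inv_mul_diagonal_mul hUV hde, hadamard_mul_diagonal_mul hU hV,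
    det_one_add_mul_diagonal_mul hUV]

end DiagonalConjugation

section Fourier

theorem sum_pow_eq_ite_of_pow_eq_one {A : Type*} [Ring A] [NoZeroDivisors A] [DecidableEq A]
    {z : A} {p : ℕ} (hz : z ^ p = 1) :
    ∑ a : Fin p, z ^ (a : ℕ) = if z = 1 then (p : A) else 0 := by
  rw [Fin.sum_univ_eq_sum_range (z ^ ·)]
  split_ifs with h
  · simp [h]
  · have hmul : (z - 1) * ∑ a ∈ Finset.range p, z ^ a = 0 := by rw [mul_geom_sum, hz, sub_self]
    exact (mul_eq_zero.mp hmul).resolve_left (sub_ne_zero.mpr h)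

theorem inv_sqrt_natCast_mul_self (n : ℕ) :
    ((√(n : ℝ) : ℝ) : ℂ)⁻¹ * ((√(n : ℝ) : ℝ) : ℂ)⁻¹ = (n : ℂ)⁻¹ := by
  rw [← mul_inv, ← ofReal_mul, Real.mul_self_sqrt n.cast_nonneg, ofReal_natCast]

/-- The normalized discrete Fourier matrix `(ω ^ (j * k) / √p)` of order `p`, with indices starting
at `0`. It is meant for a primitive `p`-th root of unity `ω`, for which it is unitary. -/
noncomputable def fourierMatrix (p : ℕ) (ω : ℂ) : Matrix (Fin p) (Fin p) ℂ :=
  of fun j k => ω ^ ((j : ℕ) * (k : ℕ)) / (√(p : ℝ) : ℝ)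

variable {p : ℕ} {ω : ℂ}

theorem fourierMatrix_apply_mul_apply [NeZero p] (hω : ω ^ p = 1) (j a b : Fin p) :
    fourierMatrix p ω j a * fourierMatrix p ω j b =
      ((√(p : ℝ) : ℝ) : ℂ)⁻¹ * fourierMatrix p ω j (a + b) := by
  have hpow : (ω ^ (j : ℕ)) ^ p = 1 := by rw [pow_right_comm, hω, one_pow]
  simp only [fourierMatrix, of_apply, pow_mul, Fin.val_add, ← pow_eq_pow_mod _ hpow, pow_add]
  ring

theorem fourierMatrix_mul_conjTranspose (hω : IsPrimitiveRoot ω p) :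
    fourierMatrix p ω * (fourierMatrix p ω)ᴴ = 1 := by
  ext j k
  have hp : p ≠ 0 := j.pos.ne'
  have hstar : star ω = ω⁻¹ := (inv_eq_conj (hω.norm'_eq_one hp)).symm
  have hpow : (ω ^ (j : ℕ) / ω ^ (k : ℕ)) ^ p = 1 := by
    rw [div_pow, pow_right_comm, pow_right_comm ω k, hω.pow_eq_one, one_pow, one_pow, div_one]
  have hone : ω ^ (j : ℕ) / ω ^ (k : ℕ) = 1 ↔ j = k := by
    rw [div_eq_one_iff_eq (pow_ne_zero _ (hω.ne_zero hp)), Fin.ext_iff]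
    exact ⟨hω.pow_inj j.2 k.2, congrArg _⟩
  have hterm (a : Fin p) : fourierMatrix p ω j a * (fourierMatrix p ω)ᴴ a k =
      (p : ℂ)⁻¹ * (ω ^ (j : ℕ) / ω ^ (k : ℕ)) ^ (a : ℕ) := by
    rw [← inv_sqrt_natCast_mul_self]
    simp only [fourierMatrix, conjTranspose_apply, of_apply, star_div₀, star_pow, hstar,
      RCLike.star_def, conj_ofReal, pow_mul, div_pow, inv_pow]
    ring
  simp only [mul_apply, hterm, ← Finset.mul_sum, sum_pow_eq_ite_of_pow_eq_one hpow, hone,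
    one_apply, mul_ite, mul_zero, inv_mul_cancel₀ (Nat.cast_ne_zero.mpr hp : (p : ℂ) ≠ 0)]

theorem stmt_10_general [NeZero p] (hω : IsPrimitiveRoot ω p)
    {lam : Fin p → ℂ} (hlam : ∀ k, lam k ≠ 0) {R : Matrix (Fin p) (Fin p) ℂ}
    (hR : R = fourierMatrix p ω * diagonal lam * (fourierMatrix p ω)ᴴ) :
    (1 + R ⊙ R⁻¹).det =
      ∏ m, (1 + (p : ℂ)⁻¹ *
        ∑ kl : Fin p × Fin p with kl.1 + kl.2 = m, lam kl.1 * (lam kl.2)⁻¹) := by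
  have hrow := fourierMatrix_apply_mul_apply hω.pow_eq_one
  have hcol (a b j : Fin p) : (fourierMatrix p ω)ᴴ a j * (fourierMatrix p ω)ᴴ b j =
      ((√(p : ℝ) : ℝ) : ℂ)⁻¹ * (fourierMatrix p ω)ᴴ (a + b) j := by
    simpa using congrArg star (hrow j a b)
  rw [hR, det_one_add_hadamard_inv (fourierMatrix_mul_conjTranspose hω) hrow hcol
    fun k => mul_inv_cancel₀ (hlam k), inv_sqrt_natCast_mul_self]

end Fourier

/-- Determinant identity `det(I_p + R ∘ R⁻¹) = ∏_m (1 + μ_m)` for `R = Q D_λ Qᴴ`,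
where `∘` is the Hadamard product and `μ_m = (1/p) ∑_{(k,l) ∈ S_m} λ_k λ_l⁻¹`
(indices written 0-based). -/
theorem stmt_10 (p : ℕ) (hp : 2 ≤ p)
    (ω : ℂ) (hω : ω = Complex.exp (2 * Real.pi * Complex.I / p))
    (Q : Matrix (Fin p) (Fin p) ℂ)
    (hQ : ∀ j k : Fin p, Q j k = ω ^ ((j : ℕ) * (k : ℕ)) / Real.sqrt p)
    (lam : Fin p → ℝ) (hlam : ∀ k, 0 < lam k)
    (R : Matrix (Fin p) (Fin p) ℂ)
    (hR : R = Q * Matrix.diagonal (fun k => (lam k : ℂ)) * Qᴴ)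
    (μ : Fin p → ℝ)
    (hμ : ∀ m : Fin p, μ m = (1 / p : ℝ) *
      ∑ kl ∈ Finset.univ.filter
        (fun kl : Fin p × Fin p => ((kl.1 : ℕ) + (kl.2 : ℕ)) % p = (m : ℕ)),
        lam kl.1 * (lam kl.2)⁻¹) :
    (1 + Matrix.hadamard R R⁻¹).det = ∏ m : Fin p, (1 + (μ m : ℂ)) := by
  have : NeZero p := ⟨by lia⟩
  obtain rfl : Q = fourierMatrix p ω := Matrix.ext hQ
  simpa [hμ, Fin.ext_iff, Fin.val_add] using stmt_10_general
    (hω ▸ isPrimitiveRoot_exp p (NeZero.ne p)) (fun k => ofReal_ne_zero.2 (hlam k).ne') hR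
end

section
/- (Vanishing Hessian at infinity for the full model) Let p ≥ 2, d = ⌊p/2⌋, and let λ(θ) = (e^{−θ_1−⋯−θ_{p−1}}, e^{θ_1}, …, e^{θ_{p−1}}) with the identification θ_{p−a} = θ_a for 1 ≤ a ≤ ⌊(p−1)/2⌋, so that λ depends on θ = (θ_1,…,θ_d). Define F(θ) = ∑_{m=1}^p log( 1 + μ_m(θ) ) with μ_m(θ) = (1/p) ∑_{(k,l)∈S_m} λ_k(θ) λ_l(θ)^{−1}. Then for any fixed θ_0 ∈ (0,∞)^d, every entry of the Hessian of F satisfies ∂²F/∂θ_i∂θ_j (r θ_0) → 0 as r → ∞. -/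
open Filter

/-!
Each summand `log (1 + μ_m)` of `F` is a log-sum-exp of linear forms in `θ`. The gradient of a
log-sum-exp is a mean under the Gibbs weights, hence its Hessian is a Gibbs covariance. Along the
ray `r θ₀` these weights concentrate on the forms that are maximal at `θ₀`, so the Hessian tends
to the covariance over the maximizers, which is zero if they are all the same form. This is so for
every `m`: write `L k` for the linear form `log λ_k`, indexed from `0` modulo `p`. The forms
`L k - L l` with `k + l = 0` vanish because `L` is even. For `m ≠ 0` the form `L m - L 0` strictly
beats all others at `θ₀`, since `L k θ₀ ≤ -L 0 θ₀` for every `k` and `L k θ₀ > 0` for `k ≠ 0`.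
-/

section Argmax

variable {ι α : Type*} [LinearOrder α]

/-- The maximizers of `h` on the finite set `s`. -/
def argmaxOn (s : Finset ι) (h : ι → α) : Finset ι :=
  {t ∈ s | ∀ u ∈ s, h u ≤ h t}

variable {s : Finset ι} {h : ι → α}

theorem mem_argmaxOn {t : ι} : t ∈ argmaxOn s h ↔ t ∈ s ∧ ∀ u ∈ s, h u ≤ h t :=
  Finset.mem_filter

theorem argmaxOn_subset : argmaxOn s h ⊆ s :=
  Finset.filter_subset _ _

theorem argmaxOn_nonempty (hs : s.Nonempty) : (argmaxOn s h).Nonempty :=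
  (s.exists_max_image h hs).imp fun _ => mem_argmaxOn.2

end Argmax

section ExpSum

variable {E ι : Type*} [NormedAddCommGroup E] [NormedSpace ℝ E]

/-- The sum of the exponentials of the linear forms `L t`, `t ∈ s`, with weights `c t`. -/
noncomputable def expSum (s : Finset ι) (c : ι → ℝ) (L : ι → E →L[ℝ] ℝ) (θ : E) : ℝ :=
  ∑ t ∈ s, c t * Real.exp (L t θ)

/-- The log-sum-exp function (free energy) of the linear forms `L t` with weights `c t`. -/
noncomputable def logSumExp (s : Finset ι) (c : ι → ℝ) (L : ι → E →L[ℝ] ℝ) (θ : E) : ℝ :=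
  Real.log (expSum s c L θ)

/-- The mean of `f` under the Gibbs weights, proportional to `c t * exp (L t θ)` on `s`. -/
noncomputable def gibbsMean (s : Finset ι) (c : ι → ℝ) (L : ι → E →L[ℝ] ℝ) (f : ι → ℝ)
    (θ : E) : ℝ :=
  expSum s (c * f) L θ / expSum s c L θ

/-- The covariance of `f` and `g` under the Gibbs weights. -/
noncomputable def gibbsCov (s : Finset ι) (c : ι → ℝ) (L : ι → E →L[ℝ] ℝ) (f g : ι → ℝ)
    (θ : E) : ℝ :=
  gibbsMean s c L (f * g) θ - gibbsMean s c L f θ * gibbsMean s c L g θ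

variable {s : Finset ι} {c : ι → ℝ} {L : ι → E →L[ℝ] ℝ} {θ θ₀ : E}

theorem expSum_pos (hc : ∀ t ∈ s, 0 < c t) (hs : s.Nonempty) (θ : E) : 0 < expSum s c L θ :=
  Finset.sum_pos (fun t ht => mul_pos (hc t ht) (Real.exp_pos _)) hs

theorem contDiff_expSum {n : WithTop ℕ∞} : ContDiff ℝ n (expSum s c L) := by
  unfold expSum
  fun_prop

theorem differentiable_expSum : Differentiable ℝ (expSum s c L) :=
  contDiff_expSum.differentiable one_ne_zero

theorem fderiv_expSum_apply (θ v : E) :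
    fderiv ℝ (expSum s c L) θ v = expSum s (c * fun t => L t v) L θ := by
  have hderiv : HasFDerivAt (expSum s c L) (∑ t ∈ s, c t • Real.exp (L t θ) • L t) θ :=
    HasFDerivAt.fun_sum fun t _ => (L t).hasFDerivAt.exp.const_mul (c t)
  rw [hderiv.fderiv, FunLike.coe_sum, Finset.sum_apply]
  exact Finset.sum_congr rfl fun t _ => by
    simp only [FunLike.coe_smul, Pi.smul_apply, smul_eq_mul, Pi.mul_apply]
    ring

theorem contDiff_logSumExp {n : WithTop ℕ∞} (hc : ∀ t ∈ s, 0 < c t) (hs : s.Nonempty) :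
    ContDiff ℝ n (logSumExp s c L) :=
  contDiff_expSum.log fun θ => (expSum_pos hc hs θ).ne'

theorem fderiv_logSumExp_apply (hθ : expSum s c L θ ≠ 0) (v : E) :
    fderiv ℝ (logSumExp s c L) θ v = gibbsMean s c L (fun t => L t v) θ := by
  unfold logSumExp
  rw [fderiv.log differentiable_expSum.differentiableAt hθ, FunLike.coe_smul, Pi.smul_apply,
    fderiv_expSum_apply, smul_eq_mul, inv_mul_eq_div, gibbsMean]

theorem fderiv_gibbsMean_apply (hθ : expSum s c L θ ≠ 0) (f : ι → ℝ) (v : E) :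
    fderiv ℝ (gibbsMean s c L f) θ v = gibbsCov s c L f (fun t => L t v) θ := by
  have hderiv : HasFDerivAt (gibbsMean s c L f) _ θ :=
    (differentiable_expSum θ).hasFDerivAt.mul
      ((hasDerivAt_inv hθ).comp_hasFDerivAt θ (differentiable_expSum θ).hasFDerivAt)
  rw [hderiv.fderiv]
  simp only [FunLike.coe_add, FunLike.coe_smul, Pi.add_apply, Pi.smul_apply, smul_eq_mul,
    fderiv_expSum_apply, gibbsCov, gibbsMean, mul_assoc]
  field_simp
  ring

theorem fderiv_fderiv_logSumExp_apply (hc : ∀ t ∈ s, 0 < c t) (hs : s.Nonempty) (θ v w : E) :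
    fderiv ℝ (fun θ => fderiv ℝ (logSumExp s c L) θ v) θ w =
      gibbsCov s c L (fun t => L t v) (fun t => L t w) θ := by
  have hgrad : (fun θ => fderiv ℝ (logSumExp s c L) θ v) = gibbsMean s c L (fun t => L t v) :=
    funext fun θ => fderiv_logSumExp_apply (expSum_pos hc hs θ).ne' v
  rw [hgrad, fderiv_gibbsMean_apply (expSum_pos hc hs θ).ne']

theorem gibbsCov_eq_zero_of_forall_eq (hθ : expSum s c L θ ≠ 0) {f : ι → ℝ} {a : ℝ}
    (hf : ∀ t ∈ s, f t = a) (g : ι → ℝ) : gibbsCov s c L f g θ = 0 := by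
  have hfactor : ∀ g, expSum s (c * (f * g)) L θ = a * expSum s (c * g) L θ := fun g => by
    rw [expSum, expSum, Finset.mul_sum]
    exact Finset.sum_congr rfl fun t ht => by
      simp only [Pi.mul_apply, hf t ht]
      ring
  have hmean : gibbsMean s c L f θ = a := by
    have := hfactor 1
    rw [mul_one, mul_one] at this
    rw [gibbsMean, this, mul_div_cancel_right₀ _ hθ]
  rw [gibbsCov, hmean, gibbsMean, gibbsMean, hfactor, mul_div_assoc, sub_self]

/-- Laplace's principle: after normalization only the maximizers survive, and evaluating their sum
at `0` just adds up the weights. -/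
theorem tendsto_exp_neg_mul_expSum_smul {t₀ : ι} (ht₀ : t₀ ∈ argmaxOn s (L · θ₀)) :
    Tendsto (fun r : ℝ => Real.exp (-(r * L t₀ θ₀)) * expSum s c L (r • θ₀)) atTop
      (nhds (expSum (argmaxOn s (L · θ₀)) c L 0)) := by
  obtain ⟨ht₀s, hmax⟩ := mem_argmaxOn.1 ht₀
  have hshift : ∀ r : ℝ, Real.exp (-(r * L t₀ θ₀)) * expSum s c L (r • θ₀) =
      ∑ t ∈ s, c t * Real.exp (r * (L t θ₀ - L t₀ θ₀)) := fun r => by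
    rw [expSum, Finset.mul_sum]
    refine Finset.sum_congr rfl fun t _ => ?_
    rw [mul_left_comm, ← Real.exp_add, map_smul, smul_eq_mul]
    ring_nf
  rw [tendsto_congr hshift]
  simp only [expSum, argmaxOn, Finset.sum_filter, map_zero, Real.exp_zero, mul_one]
  refine tendsto_finsetSum s fun t ht => ?_
  split_ifs with hmax_t
  · simp [le_antisymm (hmax t ht) (hmax_t t₀ ht₀s)]
  · have hlt : L t θ₀ < L t₀ θ₀ :=
      lt_of_not_ge fun hle => hmax_t fun u hu => (hmax u hu).trans hle
    have hexp : Tendsto (fun r : ℝ => Real.exp (r * (L t θ₀ - L t₀ θ₀))) atTop (nhds 0) :=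
      Real.tendsto_exp_atBot.comp (tendsto_id.atTop_mul_const_of_neg (sub_neg.2 hlt))
    simpa using hexp.const_mul (c t)

theorem tendsto_gibbsMean_smul (hc : ∀ t ∈ s, 0 < c t) (hs : s.Nonempty) (f : ι → ℝ) (θ₀ : E) :
    Tendsto (fun r : ℝ => gibbsMean s c L f (r • θ₀)) atTop
      (nhds (gibbsMean (argmaxOn s (L · θ₀)) c L f 0)) := by
  obtain ⟨t₀, ht₀⟩ := argmaxOn_nonempty (h := (L · θ₀)) hs
  have hpos : 0 < expSum (argmaxOn s (L · θ₀)) c L 0 :=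
    expSum_pos (fun t ht => hc t (argmaxOn_subset ht)) ⟨t₀, ht₀⟩ 0
  refine ((tendsto_exp_neg_mul_expSum_smul ht₀).div
    (tendsto_exp_neg_mul_expSum_smul ht₀) hpos.ne').congr fun r => ?_
  exact mul_div_mul_left _ _ (Real.exp_ne_zero _)

theorem tendsto_gibbsCov_smul (hc : ∀ t ∈ s, 0 < c t) (hs : s.Nonempty) (f g : ι → ℝ) (θ₀ : E) :
    Tendsto (fun r : ℝ => gibbsCov s c L f g (r • θ₀)) atTop
      (nhds (gibbsCov (argmaxOn s (L · θ₀)) c L f g 0)) :=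
  (tendsto_gibbsMean_smul hc hs _ θ₀).sub
    ((tendsto_gibbsMean_smul hc hs f θ₀).mul (tendsto_gibbsMean_smul hc hs g θ₀))

theorem tendsto_fderiv_fderiv_logSumExp_smul (hc : ∀ t ∈ s, 0 < c t) (hs : s.Nonempty)
    {l : E →L[ℝ] ℝ} (hl : ∀ t ∈ argmaxOn s (L · θ₀), L t = l) (v w : E) :
    Tendsto (fun r : ℝ => fderiv ℝ (fun θ => fderiv ℝ (logSumExp s c L) θ v) (r • θ₀) w) atTop
      (nhds 0) := by
  have hpos : 0 < expSum (argmaxOn s (L · θ₀)) c L 0 :=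
    expSum_pos (fun t ht => hc t (argmaxOn_subset ht)) (argmaxOn_nonempty hs) 0
  simp only [fderiv_fderiv_logSumExp_apply hc hs]
  rw [← gibbsCov_eq_zero_of_forall_eq hpos.ne' (f := fun t => L t v) (a := l v)
    (fun t ht => by rw [hl t ht]) fun t => L t w]
  exact tendsto_gibbsCov_smul hc hs _ _ θ₀

end ExpSum

theorem fderiv_fderiv_fun_sum_apply {𝕜 E G κ : Type*} [NontriviallyNormedField 𝕜]
    [NormedAddCommGroup E] [NormedSpace 𝕜 E] [NormedAddCommGroup G] [NormedSpace 𝕜 G]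
    {u : Finset κ} {F : κ → E → G} (hF : ∀ m ∈ u, ContDiff 𝕜 2 (F m)) (x v w : E) :
    fderiv 𝕜 (fun θ => fderiv 𝕜 (fun θ => ∑ m ∈ u, F m θ) θ v) x w =
      ∑ m ∈ u, fderiv 𝕜 (fun θ => fderiv 𝕜 (F m) θ v) x w := by
  have hgrad : (fun θ => fderiv 𝕜 (fun θ => ∑ m ∈ u, F m θ) θ v) =
      fun θ => ∑ m ∈ u, fderiv 𝕜 (F m) θ v := funext fun θ => by
    rw [fderiv_fun_sum fun m hm => (hF m hm).differentiable two_ne_zero θ, FunLike.coe_sum,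
      Finset.sum_apply]
  have hdiff : ∀ m ∈ u, DifferentiableAt 𝕜 (fun θ => fderiv 𝕜 (F m) θ v) x := fun m hm =>
    (((hF m hm).fderiv_right (m := 1) le_rfl).clm_apply contDiff_const).differentiable
      one_ne_zero x
  rw [hgrad, fderiv_fun_sum hdiff, FunLike.coe_sum, Finset.sum_apply]

section RatioSum

variable {G E : Type*} [AddCommGroup G] [Fintype G] [DecidableEq G]
  [NormedAddCommGroup E] [NormedSpace ℝ E]

/-- The exponents of `1 + a * ∑ exp (L k) / exp (L l)`: the differences `L k - L l`, and the zero
form at `none` for the summand `1`. -/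
def logRatio (L : G → E →L[ℝ] ℝ) : Option (G × G) → E →L[ℝ] ℝ
  | none => 0
  | some kl => L kl.1 - L kl.2

/-- The pairs `(k, l)` with `k + l = m`, together with `none` for the summand `1` of `1 + μ_m`. -/
def ratioIndices (m : G) : Finset (Option (G × G)) :=
  Finset.insertNone {kl : G × G | kl.1 + kl.2 = m}

variable {L : G → E →L[ℝ] ℝ} {θ₀ : E}

theorem log_one_add_mul_sum_ratio (L : G → E →L[ℝ] ℝ) (a : ℝ) (m : G) (θ : E) :
    Real.log (1 + a * ∑ kl : G × G with kl.1 + kl.2 = m,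
      Real.exp (L kl.1 θ) / Real.exp (L kl.2 θ)) =
      logSumExp (ratioIndices m) (Option.elim · 1 fun _ => a) (logRatio L) θ := by
  simp [logSumExp, expSum, ratioIndices, logRatio, Finset.sum_insertNone, Finset.mul_sum,
    Real.exp_sub]

theorem logRatio_eq_zero_of_even (heven : ∀ k, L (-k) = L k) {t : Option (G × G)}
    (ht : t ∈ ratioIndices (0 : G)) : logRatio L t = 0 := by
  rcases t with _ | ⟨k, l⟩
  · rfl
  · have hkl : k + l = 0 := by simpa [ratioIndices] using ht
    rw [logRatio, eq_neg_of_add_eq_zero_left hkl, heven, sub_self]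

theorem logRatio_lt_of_ne (hpos : ∀ k ≠ 0, 0 < L k θ₀) (hle : ∀ k, L k θ₀ ≤ -L 0 θ₀) {m : G}
    (hm : m ≠ 0) {t : Option (G × G)} (ht : t ∈ ratioIndices m) (hne : t ≠ some (m, 0)) :
    logRatio L t θ₀ < logRatio L (some (m, 0)) θ₀ := by
  have hm_pos := hpos m hm
  rcases t with _ | ⟨k, l⟩
  · have hm_le := hle m
    simp only [logRatio, zero_apply, sub_apply]
    linarith
  · have hkl : k + l = m := by simpa [ratioIndices] using ht
    have hl : l ≠ 0 := by
      rintro rfl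
      exact hne (by rw [← hkl, add_zero])
    have hl_pos := hpos l hl
    have hk_le := hle k
    simp only [logRatio, sub_apply]
    linarith

theorem exists_forall_mem_argmaxOn_logRatio_eq (heven : ∀ k, L (-k) = L k)
    (hpos : ∀ k ≠ 0, 0 < L k θ₀) (hle : ∀ k, L k θ₀ ≤ -L 0 θ₀) (m : G) :
    ∃ l, ∀ t ∈ argmaxOn (ratioIndices m) (logRatio L · θ₀), logRatio L t = l := by
  rcases eq_or_ne m 0 with rfl | hm
  · exact ⟨0, fun t ht => logRatio_eq_zero_of_even heven (argmaxOn_subset ht)⟩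
  · refine ⟨logRatio L (some (m, 0)), fun t ht => ?_⟩
    obtain ⟨ht, hmax⟩ := mem_argmaxOn.1 ht
    by_contra hne
    refine (hmax (some (m, 0)) (by simp [ratioIndices])).not_gt ?_
    exact logRatio_lt_of_ne hpos hle hm ht (ne_of_apply_ne _ hne)

theorem tendsto_fderiv_fderiv_sum_log_ratio (heven : ∀ k, L (-k) = L k)
    (hpos : ∀ k ≠ 0, 0 < L k θ₀) (hle : ∀ k, L k θ₀ ≤ -L 0 θ₀) {a : ℝ} (ha : 0 < a) (v w : E) :
    Tendsto (fun r : ℝ => fderiv ℝ (fun θ => fderiv ℝ (fun θ => ∑ m : G,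
      Real.log (1 + a * ∑ kl : G × G with kl.1 + kl.2 = m,
        Real.exp (L kl.1 θ) / Real.exp (L kl.2 θ))) θ v) (r • θ₀) w) atTop (nhds 0) := by
  have hc : ∀ m : G, ∀ t ∈ ratioIndices m, 0 < Option.elim t 1 fun _ => a := by
    rintro m (_ | _) -
    exacts [one_pos, ha]
  have hne : ∀ m : G, (ratioIndices m).Nonempty := fun m => ⟨none, Finset.none_mem_insertNone⟩
  simp only [log_one_add_mul_sum_ratio,
    fderiv_fderiv_fun_sum_apply fun m _ => contDiff_logSumExp (hc m) (hne m)]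
  rw [← Finset.sum_const_zero (s := (Finset.univ : Finset G))]
  refine tendsto_finsetSum _ fun m _ => ?_
  obtain ⟨l, hl⟩ := exists_forall_mem_argmaxOn_logRatio_eq heven hpos hle m
  exact tendsto_fderiv_fderiv_logSumExp_smul (hc m) (hne m) hl v w

end RatioSum

section Circulant

variable {n : ℕ}

/-- The position in `θ` of the parameter attached to the eigenvalue `λ_{a+1}`, in 0-based indexing,
of a symmetric circulant matrix of size `p = n + 1`. The indices `k = a + 1` and `p - k` share a
parameter; they correspond to `a` and `a.rev`. -/
def circulantParam (a : Fin n) : Fin ((n + 1) / 2) :=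
  ⟨min a a.rev, by have := a.isLt; simp only [Fin.val_rev]; omega⟩

/-- The logarithm of the eigenvalue `λ_k`, in 0-based indexing, as a linear form in `θ`: a parameter
if `k ≠ 0`, while `λ_0` normalizes the product of all eigenvalues to `1`. -/
noncomputable def circulantLogEigenvalue : Fin (n + 1) → (Fin ((n + 1) / 2) → ℝ) →L[ℝ] ℝ :=
  Fin.cons (-∑ a, .proj (circulantParam a)) fun a => .proj (circulantParam a)

theorem circulantLogEigenvalue_zero_apply (θ : Fin ((n + 1) / 2) → ℝ) :
    circulantLogEigenvalue 0 θ = -∑ a, θ (circulantParam a) := by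
  simp [circulantLogEigenvalue]

theorem circulantLogEigenvalue_succ_apply (a : Fin n) (θ : Fin ((n + 1) / 2) → ℝ) :
    circulantLogEigenvalue a.succ θ = θ (circulantParam a) :=
  rfl

theorem circulantParam_eq_mk (a : Fin n) :
    circulantParam a = ⟨min ((a : ℕ) + 1) (n + 1 - (a + 1)) - 1, by have := a.isLt; omega⟩ :=
  Fin.ext (by simp only [circulantParam, Fin.val_rev]; omega)

theorem circulantParam_rev (a : Fin n) : circulantParam a.rev = circulantParam a :=
  Fin.ext (by simp [circulantParam, min_comm])

theorem neg_succ_eq_succ_rev (a : Fin n) : -a.succ = a.rev.succ := by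
  refine neg_eq_of_add_eq_zero_right (Fin.ext ?_)
  have hsum : (a.succ : ℕ) + a.rev.succ = n + 1 := by
    simp only [Fin.val_succ, Fin.val_rev]
    omega
  rw [Fin.val_add, hsum, Nat.mod_self, Fin.val_zero]

theorem circulantLogEigenvalue_neg (k : Fin (n + 1)) :
    circulantLogEigenvalue (-k) = circulantLogEigenvalue k := by
  cases k using Fin.cases with
  | zero => rw [neg_zero]
  | succ a =>
    ext θ
    rw [neg_succ_eq_succ_rev, circulantLogEigenvalue_succ_apply,
      circulantLogEigenvalue_succ_apply, circulantParam_rev]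

variable {θ : Fin ((n + 1) / 2) → ℝ}

theorem circulantLogEigenvalue_pos (hθ : ∀ i, 0 < θ i) {k : Fin (n + 1)} (hk : k ≠ 0) :
    0 < circulantLogEigenvalue k θ := by
  obtain ⟨a, rfl⟩ := Fin.exists_succ_eq.2 hk
  exact hθ _

theorem circulantLogEigenvalue_le_neg_zero (hθ : ∀ i, 0 ≤ θ i) (k : Fin (n + 1)) :
    circulantLogEigenvalue k θ ≤ -circulantLogEigenvalue 0 θ := by
  rw [circulantLogEigenvalue_zero_apply, neg_neg]
  cases k using Fin.cases with
  | zero =>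
    rw [circulantLogEigenvalue_zero_apply]
    exact neg_le_self (Finset.sum_nonneg fun a _ => hθ _)
  | succ a =>
    exact Finset.single_le_sum (f := fun a => θ (circulantParam a)) (fun a _ => hθ _)
      (Finset.mem_univ a)

end Circulant

/-- Vanishing Hessian at infinity for the full model: with `d = ⌊p/2⌋`,
`λ(θ) = (e^{-θ_1-⋯-θ_{p-1}}, e^{θ_1}, …, e^{θ_{p-1}})` under the identification
`θ_{p-a} = θ_a`, and `F(θ) = ∑_m log(1 + μ_m(θ))`, every entry of the Hessian of
`F` tends to `0` along the ray `r θ₀`, `r → ∞`, for any fixed positive `θ₀`.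
(Indices are written 0-based, so the 1-based eigenvalue index `a+1` becomes `a`,
and the 1-based parameter index `min(a, p-a)` becomes `min(a, p-a) - 1`.) -/
theorem stmt_19 (p : ℕ) (hp : 2 ≤ p)
    (lam : (Fin (p / 2) → ℝ) → Fin p → ℝ)
    (hlam0 : ∀ θ, lam θ ⟨0, by omega⟩ =
      Real.exp (-∑ a : Fin (p - 1),
        θ ⟨min ((a : ℕ) + 1) (p - ((a : ℕ) + 1)) - 1, by have := a.isLt; omega⟩))
    (hlamk : ∀ θ (k : Fin p) (hk : 1 ≤ (k : ℕ)),
      lam θ k = Real.exp (θ ⟨min (k : ℕ) (p - (k : ℕ)) - 1, by have := k.isLt; omega⟩))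
    (F : (Fin (p / 2) → ℝ) → ℝ)
    (hF : ∀ θ, F θ = ∑ m : Fin p, Real.log (1 + (1 / p : ℝ) *
      ∑ kl ∈ Finset.univ.filter
        (fun kl : Fin p × Fin p => ((kl.1 : ℕ) + (kl.2 : ℕ)) % p = (m : ℕ)),
        lam θ kl.1 * (lam θ kl.2)⁻¹)) :
    ∀ θ₀ : Fin (p / 2) → ℝ, (∀ i, 0 < θ₀ i) → ∀ i j : Fin (p / 2),
      Tendsto
        (fun r : ℝ =>
          fderiv ℝ (fun θ => fderiv ℝ F θ (Pi.single j 1)) (r • θ₀) (Pi.single i 1))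
        atTop (nhds 0) := by
  intro θ₀ hθ₀ i j
  obtain ⟨n, rfl⟩ : ∃ n, p = n + 1 := ⟨p - 1, by omega⟩
  have hlam : ∀ θ k, lam θ k = Real.exp (circulantLogEigenvalue k θ) := fun θ k => by
    cases k using Fin.cases with
    | zero =>
      simp only [circulantLogEigenvalue_zero_apply, circulantParam_eq_mk]
      exact hlam0 θ
    | succ a =>
      rw [circulantLogEigenvalue_succ_apply, circulantParam_eq_mk]
      exact hlamk θ a.succ (Nat.le_add_left 1 a)
  have hF' : F = fun θ => ∑ m : Fin (n + 1), Real.log (1 + (1 / (n + 1 : ℕ) : ℝ) *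
      ∑ kl : Fin (n + 1) × Fin (n + 1) with kl.1 + kl.2 = m,
        Real.exp (circulantLogEigenvalue kl.1 θ) / Real.exp (circulantLogEigenvalue kl.2 θ)) := by
    funext θ
    simp only [hF, hlam, Fin.ext_iff, Fin.val_add, div_eq_mul_inv]
  rw [hF']
  exact tendsto_fderiv_fderiv_sum_log_ratio circulantLogEigenvalue_neg
    (fun _ => circulantLogEigenvalue_pos hθ₀)
    (circulantLogEigenvalue_le_neg_zero fun i => (hθ₀ i).le) (by positivity) _ _
end
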